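/- Let n ≥ 2 and let w, x : Fin n → ℚ be nonzero sum-zero weighting vectors. Then the kernels of the linear maps T_w and T_x (as ℚ-linear maps from the space of full-ranking profiles to Fin n → ℚ) are equal if and only if there exists a nonzero rational γ with x = γ·w. (Since the effective space E(w) is the orthogonal complement of ker T_w, this is exactly the statement that E(w) = E(x) if and only if w ∼ x or w ∼ −x.) -/

import Mathlib

/-- The positional voting map `T_w` as a `ℚ`-linear map from the space of
full-ranking profiles to results vectors: `T_w(p)(c) = Σ_σ p(σ) · w(σ⁻¹ c)`. -/
noncomputable def positionalMap (n : ℕ) (w : Fin n → ℚ) :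
    (Equiv.Perm (Fin n) → ℚ) →ₗ[ℚ] (Fin n → ℚ) where
  toFun p := fun c => ∑ σ : Equiv.Perm (Fin n), p σ * w (σ⁻¹ c)
  map_add' p q := by
    funext c
    simp [add_mul, Finset.sum_add_distrib]
  map_smul' a p := by
    funext c
    simp [Finset.mul_sum, mul_assoc]

/-!
Moving from the ballot `σ` to `σ * swap i j` exchanges only the candidates in positions `i` and
`j`, so `T_w` sends the difference of the two ballots to `(w i - w j) • (e_{σ i} - e_{σ j})`. Since
`σ` can place any two candidates `a ≠ b` in positions `i ≠ j`, and every linear functional `f`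
agrees on sum-zero vectors with a combination of differences `w i - w j`, there is one profile `q`,
independent of `w`, with `T_w q = f w • (e_a - e_b)`. Hence `ker T_w ≤ ker T_x` forces every
functional vanishing at `w` to vanish at `x`, that is, `x ∈ span {w}`.
-/

section Vectors

variable {ι K : Type*} [DecidableEq ι]

theorem sub_comp_swap_eq_smul_single_sub_single [Ring K] (w : ι → K) (i j : ι) :
    w - w ∘ Equiv.swap i j = (w i - w j) • (Pi.single i 1 - Pi.single j 1 : ι → K) := by
  funext k
  simp only [Pi.sub_apply, Function.comp_apply, Equiv.swap_apply_def, Pi.smul_apply,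
    Pi.single_apply, smul_eq_mul]
  split_ifs <;> simp_all

theorem dual_apply_eq_sum_sum_sub_of_sum_eq_zero [Fintype ι] [Field K]
    (hcard : (Fintype.card ι : K) ≠ 0) (f : Module.Dual K (ι → K)) {w : ι → K} (hw : ∑ i, w i = 0) :
    f w = ∑ i, ∑ j, f (Pi.single i 1) / Fintype.card ι * (w i - w j) := by
  have sum_sub (i : ι) : ∑ j, (w i - w j) = Fintype.card ι * w i := by
    simp [Finset.sum_sub_distrib, hw]
  calc
    f w = ∑ i, w i * f (Pi.single i 1) := by
      conv_lhs => rw [← LinearMap.sum_single_apply _ w, map_sum]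
      simp_rw [← smul_eq_mul, ← map_smul, ← Pi.single_smul, smul_eq_mul, mul_one]
    _ = ∑ i, ∑ j, f (Pi.single i 1) / Fintype.card ι * (w i - w j) := by
      refine Finset.sum_congr rfl fun i _ ↦ ?_
      rw [← Finset.mul_sum, sum_sub]
      field_simp

end Vectors

theorem mem_span_singleton_of_forall_dual {K V : Type*} [Field K] [AddCommGroup V] [Module K V]
    {v u : V} (h : ∀ f : Module.Dual K V, f v = 0 → f u = 0) : u ∈ Submodule.span K {v} := by
  refine (Subspace.forall_mem_dualAnnihilator_apply_eq_zero_iff _ u).mp fun f hf ↦ h f ?_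
  exact (Submodule.mem_dualAnnihilator f).mp hf v (Submodule.mem_span_singleton_self v)

section PositionalMap

variable {n : ℕ}

theorem positionalMap_smul_weight (γ : ℚ) (w : Fin n → ℚ) :
    positionalMap n (γ • w) = γ • positionalMap n w := by
  ext p c
  simp [positionalMap, Finset.mul_sum, mul_left_comm]

theorem positionalMap_single_one (w : Fin n → ℚ) (σ : Equiv.Perm (Fin n)) :
    positionalMap n w (Pi.single σ 1) = w ∘ σ.symm := by
  funext c
  simp [positionalMap, Pi.single_apply]

theorem positionalMap_single_sub_single_mul_swap (w : Fin n → ℚ) (σ : Equiv.Perm (Fin n))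
    (i j : Fin n) :
    positionalMap n w (Pi.single σ 1 - Pi.single (σ * Equiv.swap i j) 1) =
      (w i - w j) • (Pi.single (σ i) 1 - Pi.single (σ j) 1 : Fin n → ℚ) := by
  calc
    _ = (w - w ∘ Equiv.swap i j) ∘ σ.symm := by
      rw [map_sub, positionalMap_single_one, positionalMap_single_one]
      rfl
    _ = (w i - w j) • ((Pi.single i 1 ∘ σ.symm) - (Pi.single j 1 ∘ σ.symm) : Fin n → ℚ) := by
      rw [sub_comp_swap_eq_smul_single_sub_single]
      rfl
    _ = _ := by simp only [Pi.single_comp_equiv, Equiv.symm_symm]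

theorem exists_positionalMap_eq_sub_smul {a b : Fin n} (hab : a ≠ b) (i j : Fin n) :
    ∃ q, ∀ w : Fin n → ℚ,
      positionalMap n w q = (w i - w j) • (Pi.single a 1 - Pi.single b 1 : Fin n → ℚ) := by
  obtain rfl | hij := eq_or_ne i j
  · exact ⟨0, fun w ↦ by simp⟩
  · have twoTransitive := Equiv.Perm.isMultiplyPretransitive (Fin n) 2
    obtain ⟨σ, rfl, rfl⟩ := MulAction.is_two_pretransitive_iff.mp twoTransitive hij hab
    exact ⟨_, fun w ↦ positionalMap_single_sub_single_mul_swap w σ i j⟩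

theorem exists_positionalMap_eq_dual_smul {a b : Fin n} (hab : a ≠ b)
    (f : Module.Dual ℚ (Fin n → ℚ)) :
    ∃ q, ∀ w : Fin n → ℚ, ∑ c, w c = 0 →
      positionalMap n w q = f w • (Pi.single a 1 - Pi.single b 1 : Fin n → ℚ) := by
  have : Nonempty (Fin n) := ⟨a⟩
  have hcard : (Fintype.card (Fin n) : ℚ) ≠ 0 := Nat.cast_ne_zero.mpr Fintype.card_ne_zero
  choose q hq using exists_positionalMap_eq_sub_smul hab
  refine ⟨∑ i, ∑ j, (f (Pi.single i 1) / Fintype.card (Fin n)) • q i j, fun w hw ↦ ?_⟩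
  simp only [map_sum, map_smul, hq, smul_smul, ← Finset.sum_smul]
  rw [← dual_apply_eq_sum_sum_sub_of_sum_eq_zero hcard f hw]

theorem ker_positionalMap_le_iff_mem_span [Nontrivial (Fin n)] {w x : Fin n → ℚ}
    (hw : ∑ c, w c = 0) (hx : ∑ c, x c = 0) :
    LinearMap.ker (positionalMap n w) ≤ LinearMap.ker (positionalMap n x) ↔
      x ∈ Submodule.span ℚ {w} := by
  constructor
  · intro hker
    refine mem_span_singleton_of_forall_dual fun f hfw ↦ ?_
    obtain ⟨a, b, hab⟩ := exists_pair_ne (Fin n)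
    obtain ⟨q, hq⟩ := exists_positionalMap_eq_dual_smul hab f
    have hqw : q ∈ LinearMap.ker (positionalMap n w) := by simp [hq w hw, hfw]
    have hqx : f x • (Pi.single a 1 - Pi.single b 1 : Fin n → ℚ) = 0 := hq x hx ▸ hker hqw
    simpa [hab] using congrFun hqx a
  · intro hmem
    obtain ⟨γ, rfl⟩ := Submodule.mem_span_singleton.mp hmem
    intro p hp
    simp [positionalMap_smul_weight, LinearMap.mem_ker.mp hp]

theorem ker_positionalMap_eq_iff_span_eq [Nontrivial (Fin n)] {w x : Fin n → ℚ}
    (hw : ∑ c, w c = 0) (hx : ∑ c, x c = 0) :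
    LinearMap.ker (positionalMap n w) = LinearMap.ker (positionalMap n x) ↔
      Submodule.span ℚ {w} = Submodule.span ℚ {x} := by
  simp only [le_antisymm_iff, ker_positionalMap_le_iff_mem_span hw hx,
    ker_positionalMap_le_iff_mem_span hx hw, Submodule.span_singleton_le_iff_mem, and_comm]

end PositionalMap

/-- For `n ≥ 2` and nonzero sum-zero weighting vectors `w, x`,
the kernels of `T_w` and `T_x` coincide if and only if `x` is a nonzero rational
multiple of `w` (equivalently, `E(w) = E(x)` iff `w ∼ x` or `w ∼ −x`). -/
theorem ker_eq_iff_scalar_multiple (n : ℕ) (hn : 2 ≤ n)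
    (w x : Fin n → ℚ) (hw : w ≠ 0) (hx : x ≠ 0)
    (hw0 : ∑ c, w c = 0) (hx0 : ∑ c, x c = 0) :
    LinearMap.ker (positionalMap n w) = LinearMap.ker (positionalMap n x) ↔
      ∃ γ : ℚ, γ ≠ 0 ∧ x = γ • w := by
  have : Nontrivial (Fin n) := Fin.nontrivial_iff_two_le.mpr hn
  rw [ker_positionalMap_eq_iff_span_eq hw0 hx0, Submodule.span_singleton_eq_span_singleton]
  simp only [← Units.exists_iff_ne_zero, Units.smul_def, eq_comm]
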